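/- arXiv:1505.03575 — 5 statements merged into one kernel-verified Lean document; each statement's English description precedes it below -/
import Mathlib

section
/- For quaternions α, β, c, the equation αx − xβ = c has a unique solution x ∈ ℍ if and only if P_{α,β} := |α|² − (α + ᾱ)β + β² ≠ 0; in that case the unique solution is x = (ᾱc − cβ) · P_{α,β}⁻¹. -/
open Quaternion

/-!
Write `D a b x = a * x - x * b`. If `a + a'` and `a' * a` are central, then `a` and `a'` commute,
and both `D a' b ∘ D a b` and `D a b ∘ D a' b` are right multiplication by
`P = a' * a - (a + a') * b + b ^ 2`. For `P ≠ 0`, applying the injective map `D a' b` turns the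
equation `D a b x = c` into `x * P = D a' b c`. For `P = 0`, the range of `D a' b` lies in the
kernel of `D a b`, so `D a b` can only be injective if `D a' b = 0`, which forces `a' = b` to be
central. A central quaternion equals its conjugate, so then `D a b = D a' b = 0` as well.
-/

section Ring

variable {R : Type*} [Ring R]

/-- The Sylvester operator `x ↦ a * x - x * b`, as an additive homomorphism. -/
def sylvesterHom (a b : R) : R →+ R :=
  AddMonoidHom.mulLeft a - AddMonoidHom.mulRight b

@[simp]
theorem sylvesterHom_apply (a b x : R) : sylvesterHom a b x = a * x - x * b := rfl

theorem sylvesterHom_eq_zero_iff {a b : R} :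
    sylvesterHom a b = 0 ↔ a = b ∧ a ∈ Subring.center R := by
  simp only [DFunLike.ext_iff, sylvesterHom_apply, AddMonoidHom.zero_apply, sub_eq_zero,
    Subring.mem_center_iff]
  constructor
  · intro h
    obtain rfl : a = b := by simpa using h 1
    exact ⟨rfl, fun x => (h x).symm⟩
  · rintro ⟨rfl, ha⟩ x
    exact (ha x).symm

/-- The quadratic polynomial `X ^ 2 - (a + a') * X + a' * a` evaluated at `b`. For `a' = star a`
in the quaternions, this is the element `P` attached to `a` and `b`. -/
def conjQuadratic (a a' b : R) : R :=
  a' * a - (a + a') * b + b ^ 2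

theorem commute_of_add_mem_center {a a' : R} (hadd : a + a' ∈ Subring.center R) :
    Commute a a' := by
  simpa [Commute, SemiconjBy, mul_add, add_mul] using Subring.mem_center_iff.1 hadd a

theorem conjQuadratic_swap {a a' : R} (h : Commute a a') (b : R) :
    conjQuadratic a' a b = conjQuadratic a a' b := by
  rw [conjQuadratic, conjQuadratic, h.eq, add_comm a']

theorem sylvesterHom_conj_sylvesterHom {a a' : R} (hadd : a + a' ∈ Subring.center R)
    (hmul : a' * a ∈ Subring.center R) (b x : R) :
    sylvesterHom a' b (sylvesterHom a b x) = x * conjQuadratic a a' b := by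
  rw [Subring.mem_center_iff] at hadd hmul
  calc sylvesterHom a' b (sylvesterHom a b x)
      = a' * a * x - (a + a') * x * b + x * b ^ 2 := by
        simp only [sylvesterHom_apply]
        noncomm_ring
    _ = x * (a' * a) - x * (a + a') * b + x * b ^ 2 := by rw [hmul, hadd]
    _ = x * conjQuadratic a a' b := by
        rw [conjQuadratic]
        noncomm_ring

theorem sylvesterHom_sylvesterHom_conj {a a' : R} (hadd : a + a' ∈ Subring.center R)
    (hmul : a' * a ∈ Subring.center R) (b x : R) :
    sylvesterHom a b (sylvesterHom a' b x) = x * conjQuadratic a a' b := by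
  have hcomm := commute_of_add_mem_center hadd
  rw [← conjQuadratic_swap hcomm]
  exact sylvesterHom_conj_sylvesterHom (add_comm a a' ▸ hadd) (hcomm.eq ▸ hmul) b x

theorem sylvesterHom_conj_injective [NoZeroDivisors R] {a a' b : R}
    (hadd : a + a' ∈ Subring.center R) (hmul : a' * a ∈ Subring.center R)
    (hP : conjQuadratic a a' b ≠ 0) : Function.Injective (sylvesterHom a' b) :=
  .of_comp (f := sylvesterHom a b) fun x y hxy => mul_right_cancel₀ hP <| by
    simpa only [Function.comp_apply, sylvesterHom_sylvesterHom_conj hadd hmul] using hxy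

theorem conjQuadratic_ne_zero_of_injective [Nontrivial R] {a a' b : R}
    (hadd : a + a' ∈ Subring.center R) (hmul : a' * a ∈ Subring.center R)
    (hcenter : a' ∈ Subring.center R → a' = a)
    (hinj : Function.Injective (sylvesterHom a b)) : conjQuadratic a a' b ≠ 0 := by
  intro hP
  have hconj : sylvesterHom a' b = 0 := by
    ext x
    apply hinj
    rw [sylvesterHom_sylvesterHom_conj hadd hmul, hP, mul_zero, AddMonoidHom.zero_apply, map_zero]
  obtain rfl : a' = a := hcenter (sylvesterHom_eq_zero_iff.1 hconj).2
  exact one_ne_zero (hinj (by simp only [hconj, AddMonoidHom.zero_apply]) : (1 : R) = 0)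

end Ring

theorem injective_of_existsUnique_map_eq {G H : Type*} [AddGroup G] [AddGroup H] (f : G →+ H)
    {c : H} (h : ∃! x, f x = c) : Function.Injective f := by
  obtain ⟨x, hx, hunique⟩ := h
  refine (injective_iff_map_eq_zero f).2 fun z hz => ?_
  have hxz : x + z = x := hunique (x + z) (by simp only [map_add, hz, add_zero, hx])
  exact add_eq_left.1 hxz

section DivisionRing

variable {D : Type*} [DivisionRing D]

theorem sylvesterHom_eq_iff {a a' b : D} (hadd : a + a' ∈ Subring.center D)
    (hmul : a' * a ∈ Subring.center D) (hP : conjQuadratic a a' b ≠ 0) (c x : D) :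
    sylvesterHom a b x = c ↔ x = sylvesterHom a' b c * (conjQuadratic a a' b)⁻¹ := by
  rw [← (sylvesterHom_conj_injective hadd hmul hP).eq_iff,
    sylvesterHom_conj_sylvesterHom hadd hmul, eq_mul_inv_iff_mul_eq₀ hP]

theorem sylvester_scalar_unique_general {a a' : D} (hadd : a + a' ∈ Subring.center D)
    (hmul : a' * a ∈ Subring.center D) (hcenter : a' ∈ Subring.center D → a' = a) (b c : D) :
    ((∃! x : D, a * x - x * b = c) ↔ conjQuadratic a a' b ≠ 0) ∧
      (conjQuadratic a a' b ≠ 0 →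
        ∀ x : D, a * x - x * b = c ↔ x = (a' * c - c * b) * (conjQuadratic a a' b)⁻¹) := by
  simp only [← sylvesterHom_apply]
  refine ⟨⟨fun h => ?_, fun hP => ?_⟩, fun hP => sylvesterHom_eq_iff hadd hmul hP c⟩
  · exact conjQuadratic_ne_zero_of_injective hadd hmul hcenter
      (injective_of_existsUnique_map_eq (sylvesterHom a b) h)
  · simp only [sylvesterHom_eq_iff hadd hmul hP c, existsUnique_eq]

end DivisionRing

section Quaternion

variable {R : Type*} [CommRing R]

theorem quaternion_coe_mem_center (r : R) : (r : ℍ[R]) ∈ Subring.center ℍ[R] :=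
  Subring.mem_center_iff.2 fun q => (Quaternion.coe_commutes r q).symm

theorem quaternion_add_star_mem_center (q : ℍ[R]) : q + star q ∈ Subring.center ℍ[R] := by
  rw [Quaternion.self_add_star']
  exact quaternion_coe_mem_center _

theorem quaternion_star_mul_self_mem_center (q : ℍ[R]) : star q * q ∈ Subring.center ℍ[R] := by
  rw [Quaternion.star_mul_self]
  exact quaternion_coe_mem_center _

theorem quaternion_star_eq_self_of_mem_center {q : ℍ[R]} (hq : q ∈ Subring.center ℍ[R]) :
    star q = q := by
  rw [Subring.mem_center_iff] at hq
  have hcommI (p : ℍ[R]) := congrArg QuaternionAlgebra.imI (hq p)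
  have hcommJ (p : ℍ[R]) := congrArg QuaternionAlgebra.imJ (hq p)
  simp only [Quaternion.imI_mul, Quaternion.imJ_mul] at hcommI hcommJ
  have hI : -q.imI = q.imI := by simpa using (hcommJ ⟨0, 0, 0, 1⟩).symm
  have hJ : -q.imJ = q.imJ := by simpa using hcommI ⟨0, 0, 0, 1⟩
  have hK : -q.imK = q.imK := by simpa using (hcommI ⟨0, 0, 1, 0⟩).symm
  ext <;> simp [*]

end Quaternion

/-- For quaternions `α, β, c`, the equation `αx − xβ = c` has a unique
solution `x ∈ ℍ` if and only if `P = |α|² − (α + ᾱ)β + β² ≠ 0`; in that case the unique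
solution is `x = (ᾱc − cβ) * P⁻¹`. -/
theorem sylvester_scalar_unique (α β c : ℍ[ℝ])
    (P : ℍ[ℝ]) (hP : P = ((Quaternion.normSq α : ℝ) : ℍ[ℝ]) - (α + star α) * β + β ^ 2) :
    ((∃! x : ℍ[ℝ], α * x - x * β = c) ↔ P ≠ 0) ∧
      (P ≠ 0 → ∀ x : ℍ[ℝ], α * x - x * β = c ↔ x = (star α * c - c * β) * P⁻¹) := by
  obtain rfl : P = conjQuadratic α (star α) β := by
    rw [hP, conjQuadratic, Quaternion.star_mul_self]
  exact sylvester_scalar_unique_general (quaternion_add_star_mem_center α)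
    (quaternion_star_mul_self_mem_center α)
    (fun h => by simpa using (quaternion_star_eq_self_of_mem_center h).symm) β c
end

section
/- Let A ∈ ℍ^{n×n} and B ∈ ℍ^{m×m}. The Sylvester equation AX − XB = C has a unique solution X ∈ ℍ^{n×m} for every right-hand side C ∈ ℍ^{n×m} (equivalently, the real-linear map X ↦ AX − XB on ℍ^{n×m} is bijective) if and only if σ_r(A) ∩ σ_r(B) = ∅. -/
open Quaternion Matrix

/-- The right spectrum of a square quaternion matrix: the set of `α ∈ ℍ` for which there is
a nonzero vector `x` with `Mx = xα`. -/
def rightSpectrum {n : ℕ} (M : Matrix (Fin n) (Fin n) ℍ[ℝ]) : Set ℍ[ℝ] :=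
  {α : ℍ[ℝ] | ∃ x : Fin n → ℍ[ℝ], x ≠ 0 ∧ M.mulVec x = fun i => x i * α}

/-!
Right multiplication by `ℂ ⊆ ℍ` makes quaternionic columns a finite-dimensional complex vector space
on which matrices act `ℂ`-linearly. A nonzero `X` with `AX = XB` intertwines the two actions, so
their minimal polynomials are not coprime; a common root is a common eigenvalue, hence a common
right eigenvalue of `A` and `B`.

Conversely, let `Ax = xα` and `By = yα` with `x, y ≠ 0`, and choose a row `u` with `uy = 1`. Given a
column `c`, a solution `X` of `AX - XB = cu` satisfies `A(Xy) - (Xy)α = c`. So if `X ↦ AX - XB` is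
surjective, then `w ↦ Aw - wα` is surjective, hence injective by finite-dimensionality over `ℝ`;
but it kills `x`.
-/

section Intertwining

open Polynomial

theorem aeval_comp_eq_comp_aeval {R V W : Type*} [CommSemiring R] [AddCommMonoid V] [Module R V]
    [AddCommMonoid W] [Module R W] {f : Module.End R V} {g : Module.End R W} {X : W →ₗ[R] V}
    (h : f ∘ₗ X = X ∘ₗ g) (p : R[X]) : aeval f p ∘ₗ X = X ∘ₗ aeval g p := by
  induction p using Polynomial.induction_on' with
  | add p q hp hq => rw [map_add, map_add, LinearMap.add_comp, LinearMap.comp_add, hp, hq]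
  | monomial k a =>
    have hpow : (f ^ k) ∘ₗ X = X ∘ₗ (g ^ k) := Module.End.commute_pow_left_of_commute h k
    rw [aeval_monomial, aeval_monomial, ← Algebra.smul_def, ← Algebra.smul_def,
      LinearMap.smul_comp, LinearMap.comp_smul, hpow]

theorem eq_zero_of_comp_eq_comp_of_isCoprime_minpoly {R V W : Type*} [CommRing R]
    [AddCommGroup V] [Module R V] [AddCommGroup W] [Module R W] {f : Module.End R V}
    {g : Module.End R W} (hfg : IsCoprime (minpoly R f) (minpoly R g)) {X : W →ₗ[R] V}
    (h : f ∘ₗ X = X ∘ₗ g) : X = 0 := by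
  obtain ⟨a, b, hab⟩ := hfg
  calc
    X = aeval f (a * minpoly R f + b * minpoly R g) ∘ₗ X := by
      rw [hab, map_one, Module.End.one_eq_id, LinearMap.id_comp]
    _ = aeval f (b * minpoly R g) ∘ₗ X := by
      rw [map_add, map_mul _ a, minpoly.aeval, mul_zero, zero_add]
    _ = X ∘ₗ aeval g (b * minpoly R g) := aeval_comp_eq_comp_aeval h _
    _ = 0 := by rw [map_mul, minpoly.aeval, mul_zero, LinearMap.comp_zero]

theorem exists_common_hasEigenvalue_of_comp_eq_comp {K V W : Type*} [Field K] [IsAlgClosed K]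
    [AddCommGroup V] [Module K V] [FiniteDimensional K V]
    [AddCommGroup W] [Module K W] [FiniteDimensional K W]
    {f : Module.End K V} {g : Module.End K W} {X : W →ₗ[K] V} (hX : X ≠ 0)
    (h : f ∘ₗ X = X ∘ₗ g) : ∃ μ, f.HasEigenvalue μ ∧ g.HasEigenvalue μ := by
  have hcoprime : ¬IsCoprime (minpoly K f) (minpoly K g) := fun hfg =>
    hX (eq_zero_of_comp_eq_comp_of_isCoprime_minpoly hfg h)
  rw [isCoprime_iff_aeval_ne_zero_of_isAlgClosed (k := K) K] at hcoprime
  push Not at hcoprime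
  obtain ⟨μ, hf, hg⟩ := hcoprime
  exact ⟨μ, Module.End.hasEigenvalue_of_isRoot hf, Module.End.hasEigenvalue_of_isRoot hg⟩

end Intertwining

section SylvesterMap

variable {m n p K D : Type*} [Fintype m] [Fintype n]

variable (K) in
/-- The Sylvester operator `X ↦ AX - XB` on rectangular matrices with entries in a `K`-algebra. -/
def sylvesterMap [CommSemiring K] [Ring D] [Algebra K D] (A : Matrix n n D)
    (B : Matrix m m D) : Matrix n m D →ₗ[K] Matrix n m D :=
  mulLeftLinearMap m K A - mulRightLinearMap n K B

theorem sylvesterMap_apply [CommSemiring K] [Ring D] [Algebra K D] (A : Matrix n n D)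
    (B : Matrix m m D) (X : Matrix n m D) : sylvesterMap K A B X = A * X - X * B :=
  rfl

theorem surjective_sylvesterMap_of_mul_eq_mul [Fintype p] [DecidableEq p] [CommSemiring K] [Ring D]
    [Algebra K D] {A : Matrix n n D} {B : Matrix m m D} {B' : Matrix p p D} {Y : Matrix m p D}
    {U : Matrix p m D} (hY : B * Y = Y * B') (hU : U * Y = 1)
    (h : Function.Surjective (sylvesterMap K A B)) :
    Function.Surjective (sylvesterMap K A B') := by
  intro C
  obtain ⟨X, hX⟩ := h (C * U)
  rw [sylvesterMap_apply] at hX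
  refine ⟨X * Y, ?_⟩
  rw [sylvesterMap_apply]
  calc
    A * (X * Y) - X * Y * B' = (A * X - X * B) * Y := by
      rw [Matrix.sub_mul, Matrix.mul_assoc X B, hY, Matrix.mul_assoc, Matrix.mul_assoc]
    _ = C * U * Y := by rw [hX]
    _ = C := by rw [Matrix.mul_assoc, hU, Matrix.mul_one]

theorem exists_mul_replicateCol_eq_one [DivisionRing D] {y : m → D} (hy : y ≠ 0) :
    ∃ U : Matrix Unit m D, U * replicateCol Unit y = 1 := by
  classical
  obtain ⟨j, hj⟩ := Function.ne_iff.mp hy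
  refine ⟨Matrix.single () j (y j)⁻¹, Matrix.ext fun _ _ => ?_⟩
  simpa using inv_mul_cancel₀ hj

-- Without the type ascription, `*` elaborates to the product of `CStarMatrix`.
theorem mul_replicateCol_eq_replicateCol_mul_diagonal [NonUnitalNonAssocSemiring D]
    {M : Matrix n n D} {x : n → D} {a : D} (h : M *ᵥ x = fun i => x i * a) :
    M * replicateCol Unit x = replicateCol Unit x * (diagonal fun _ => a : Matrix Unit Unit D) := by
  rw [← replicateCol_mulVec, h]
  ext
  simp

theorem not_injective_sylvesterMap_of_mulVec_eq_mul [Field K] [DivisionRing D] [Algebra K D]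
    [FiniteDimensional K D] {A : Matrix n n D} {B : Matrix m m D} {a : D} {x : n → D} {y : m → D}
    (hx : x ≠ 0) (hy : y ≠ 0) (hA : A *ᵥ x = fun i => x i * a) (hB : B *ᵥ y = fun i => y i * a) :
    ¬Function.Injective (sylvesterMap K A B) := by
  intro hinj
  let T := sylvesterMap K A (diagonal fun _ : Unit => a)
  obtain ⟨U, hU⟩ := exists_mul_replicateCol_eq_one hy
  have hsurj : Function.Surjective T :=
    surjective_sylvesterMap_of_mul_eq_mul (mul_replicateCol_eq_replicateCol_mul_diagonal hB) hU
      (LinearMap.injective_iff_surjective.mp hinj)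
  have hker : T (replicateCol Unit x) = 0 :=
    sub_eq_zero.mpr (mul_replicateCol_eq_replicateCol_mul_diagonal hA)
  exact hx ((replicateCol_eq_zero x).mp
    ((map_eq_zero_iff T (LinearMap.injective_iff_surjective.mpr hsurj)).mp hker))

end SylvesterMap

section RightSpectrum

/-- The complex vector space structure on `ℍ` in which `z : ℂ` acts by right multiplication, chosen
so that left multiplication by quaternion matrices is complex linear. -/
noncomputable local instance rightComplexModule : Module ℂ ℍ[ℝ] :=
  Module.compHom ℍ[ℝ] (Quaternion.ofComplex.toOpposite fun z w => by
    simp only [Commute, SemiconjBy, ← map_mul, mul_comm]).toRingHom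

theorem complex_smul_eq_mul (z : ℂ) (q : ℍ[ℝ]) : z • q = q * (z : ℍ[ℝ]) :=
  rfl

local instance smulCommClass_complex_quaternion : SMulCommClass ℂ ℍ[ℝ] ℍ[ℝ] :=
  ⟨fun _ _ _ => mul_assoc _ _ _⟩

local instance isScalarTower_real_complex_quaternion : IsScalarTower ℝ ℂ ℍ[ℝ] :=
  ⟨fun r z q => by
    simp only [complex_smul_eq_mul, ← Quaternion.coe_ofComplex, map_smul, mul_smul_comm]⟩

local instance finiteDimensional_complex_quaternion : FiniteDimensional ℂ ℍ[ℝ] :=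
  Module.Finite.of_restrictScalars_finite ℝ ℂ ℍ[ℝ]

theorem coeComplex_mem_rightSpectrum_of_hasEigenvalue {n : ℕ} {M : Matrix (Fin n) (Fin n) ℍ[ℝ]}
    {z : ℂ} (h : Module.End.HasEigenvalue (mulVecBilin ℍ[ℝ] ℂ M) z) :
    (z : ℍ[ℝ]) ∈ rightSpectrum M :=
  let ⟨x, hx⟩ := h.exists_hasEigenvector
  ⟨x, hx.2, hx.apply_eq_smul⟩

theorem nonempty_rightSpectrum_inter_of_mul_eq_mul {n m : ℕ} {A : Matrix (Fin n) (Fin n) ℍ[ℝ]}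
    {B : Matrix (Fin m) (Fin m) ℍ[ℝ]} {X : Matrix (Fin n) (Fin m) ℍ[ℝ]} (hX : X ≠ 0)
    (h : A * X = X * B) : (rightSpectrum A ∩ rightSpectrum B).Nonempty := by
  have hX' : mulVecBilin ℍ[ℝ] ℂ X ≠ 0 := fun h0 =>
    hX (ext_iff_mulVec.mpr fun v => (LinearMap.congr_fun h0 v).trans (zero_mulVec v).symm)
  have hcomp : mulVecBilin ℍ[ℝ] ℂ A ∘ₗ mulVecBilin ℍ[ℝ] ℂ X =
      mulVecBilin ℍ[ℝ] ℂ X ∘ₗ mulVecBilin ℍ[ℝ] ℂ B := by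
    refine LinearMap.ext fun v => ?_
    simp only [LinearMap.comp_apply, mulVecBilin_apply, mulVec_mulVec, h]
  obtain ⟨z, hA, hB⟩ := exists_common_hasEigenvalue_of_comp_eq_comp hX' hcomp
  exact ⟨z, coeComplex_mem_rightSpectrum_of_hasEigenvalue hA,
    coeComplex_mem_rightSpectrum_of_hasEigenvalue hB⟩

theorem injective_sylvesterMap_iff_rightSpectrum_inter_eq_empty {n m : ℕ}
    {A : Matrix (Fin n) (Fin n) ℍ[ℝ]} {B : Matrix (Fin m) (Fin m) ℍ[ℝ]} :
    Function.Injective (sylvesterMap ℝ A B) ↔ rightSpectrum A ∩ rightSpectrum B = ∅ := by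
  constructor
  · intro hinj
    refine Set.eq_empty_of_forall_notMem fun α hα => ?_
    obtain ⟨⟨x, hx, hAx⟩, ⟨y, hy, hBy⟩⟩ := hα
    exact not_injective_sylvesterMap_of_mulVec_eq_mul hx hy hAx hBy hinj
  · intro hempty
    refine (injective_iff_map_eq_zero _).mpr fun X hX => ?_
    by_contra hX0
    exact (nonempty_rightSpectrum_inter_of_mul_eq_mul hX0 (sub_eq_zero.mp hX)).ne_empty hempty

end RightSpectrum

/-- The Sylvester equation `AX − XB = C` has a unique solution
`X ∈ ℍ^{n×m}` for every right-hand side `C` if and only if `σ_r(A) ∩ σ_r(B) = ∅`. -/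
theorem sylvester_unique_iff_spectra_disjoint (n m : ℕ)
    (A : Matrix (Fin n) (Fin n) ℍ[ℝ]) (B : Matrix (Fin m) (Fin m) ℍ[ℝ]) :
    (∀ C : Matrix (Fin n) (Fin m) ℍ[ℝ],
        ∃! X : Matrix (Fin n) (Fin m) ℍ[ℝ], A * X - X * B = C) ↔
      rightSpectrum A ∩ rightSpectrum B = ∅ := by
  calc
    (∀ C, ∃! X : Matrix (Fin n) (Fin m) ℍ[ℝ], A * X - X * B = C) ↔
        Function.Bijective (sylvesterMap ℝ A B) :=
      (Function.bijective_iff_existsUnique _).symm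
    _ ↔ Function.Injective (sylvesterMap ℝ A B) :=
      ⟨And.left, fun hinj => ⟨hinj, LinearMap.injective_iff_surjective.mp hinj⟩⟩
    _ ↔ rightSpectrum A ∩ rightSpectrum B = ∅ :=
      injective_sylvesterMap_iff_rightSpectrum_inter_eq_empty
end

section
/- Let α_1, …, α_n be quaternions in the same conjugacy class V, let A ∈ ℍ^{n×n} be the lower bidiagonal matrix with diagonal α_1, …, α_n and ones on the first subdiagonal, let A′ ∈ ℍ^{n×n} be the lower bidiagonal matrix with diagonal ᾱ_1, …, ᾱ_n and −1's on the first subdiagonal, and let Ã = [(α_i − ᾱ_{i+1})δ_{i,j+1} + δ_{i,j+2}]_{i,j=1}^{n}. Let B ∈ ℍ^{m×m} be such that 𝒳_V(B) := B² − (α_1 + ᾱ_1)B + |α_1|² I_m is invertible (which holds precisely when V ∩ σ_r(B) = ∅). Then for every C ∈ ℍ^{n×m} the equation AX − XB = C has the unique solution X = Σ_{k=0}^{n−1} Ã^k (A′C − CB) (𝒳_V(B))^{−(k+1)}. -/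
open Quaternion Matrix

/-! Left multiplication `l` by `A` and right multiplication `r` by `B` commute, and the equation is
`(l - r) X = C`. For the quadratic `q(x) = x² - t x + s` vanishing on the conjugacy class `V`,
`(t - l - r) (l - r) = q(r) - q(l)`. Here `q(r)` is right multiplication by the invertible matrix
`𝒳_V(B)`, while `q(l)` is left multiplication by `q(A)`, which is `Ã`, a strictly lower triangular
and hence nilpotent matrix. So `q(r) - q(l)` is inverted by a finite geometric series, and the
inverse of `l - r` is that series times `t - l - r`; the latter sends `C` to `A′ C - C B`. -/

section Ring

variable {E : Type*} [Ring E]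

theorem unit_sub_mul_sum_of_pow_eq_zero {x : E} {u : Eˣ} (h : Commute x u) {N : ℕ}
    (hx : x ^ N = 0) :
    (u - x) * ∑ k ∈ Finset.range N, x ^ k * (↑u⁻¹ : E) ^ (k + 1) = 1 := by
  have hcomm : Commute x (↑u⁻¹ : E) := h.units_inv_right
  have hfactor : (u : E) - x = u * (1 - x * ↑u⁻¹) := by
    rw [hcomm.eq, mul_sub, mul_one, Units.mul_inv_cancel_left]
  have hsum : ∑ k ∈ Finset.range N, x ^ k * (↑u⁻¹ : E) ^ (k + 1) =
      (∑ k ∈ Finset.range N, (x * ↑u⁻¹) ^ k) * ↑u⁻¹ := by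
    simp only [Finset.sum_mul, hcomm.mul_pow, pow_succ, mul_assoc]
  rw [hfactor, hsum, mul_assoc, ← mul_assoc (1 - _), mul_neg_geom_sum, hcomm.mul_pow, hx, zero_mul,
    sub_zero, one_mul, Units.mul_inv]

theorem sum_mul_unit_sub_of_pow_eq_zero {x : E} {u : Eˣ} (h : Commute x u) {N : ℕ}
    (hx : x ^ N = 0) :
    (∑ k ∈ Finset.range N, x ^ k * (↑u⁻¹ : E) ^ (k + 1)) * (u - x) = 1 := by
  have hxw : Commute x (↑u⁻¹ : E) := h.units_inv_right
  have huw : Commute (u : E) (↑u⁻¹ : E) := (Commute.refl (u : E)).units_inv_right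
  have hcomm : Commute ((u : E) - x) (∑ k ∈ Finset.range N, x ^ k * (↑u⁻¹ : E) ^ (k + 1)) :=
    Commute.sum_right _ _ _ fun k _ =>
      ((h.symm.sub_left (Commute.refl x)).pow_right k).mul_right ((huw.sub_left hxw).pow_right _)
  rw [← hcomm.eq, unit_sub_mul_sum_of_pow_eq_zero h hx]

end Ring

section Algebra

variable {K E : Type*} [CommSemiring K] [Ring E] [Algebra K E]

/-- The quadratic `x² - t x + s`. When `t = α + ᾱ` and `s = |α|²` for a quaternion `α` in the
conjugacy class `V`, this is the paper's `𝒳_V(x)`. -/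
def classQuadratic (t s : K) (x : E) : E :=
  x * x - algebraMap K E t * x + algebraMap K E s

theorem algebraMap_sub_sub_mul_sub {l r : E} (h : Commute l r) (t s : K) :
    (algebraMap K E t - l - r) * (l - r) = classQuadratic t s r - classQuadratic t s l := by
  simp only [classQuadratic, mul_sub, sub_mul, h.eq]
  abel

theorem sub_mul_algebraMap_sub_sub {l r : E} (h : Commute l r) (t s : K) :
    (l - r) * (algebraMap K E t - l - r) = classQuadratic t s r - classQuadratic t s l := by
  simp only [classQuadratic, mul_sub, sub_mul, h.eq, Algebra.commutes]
  abel

theorem commute_classQuadratic_right {x y : E} (h : Commute y x) (t s : K) :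
    Commute y (classQuadratic t s x) :=
  ((h.mul_right h).sub_right ((Algebra.commute_algebraMap_right t y).mul_right h)).add_right
    (Algebra.commute_algebraMap_right s y)

theorem commute_classQuadratic {l r : E} (h : Commute l r) (t s : K) :
    Commute (classQuadratic t s l) (classQuadratic t s r) :=
  commute_classQuadratic_right (commute_classQuadratic_right h.symm t s).symm t s

/-- The inverse of `l - r` when `classQuadratic t s l ^ N = 0` and `u = classQuadratic t s r`. The
sum is the geometric series inverting `u - classQuadratic t s l`. -/
def sylvesterInverse (t s : K) (l r : E) (u : Eˣ) (N : ℕ) : E :=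
  (∑ k ∈ Finset.range N, classQuadratic t s l ^ k * (↑u⁻¹ : E) ^ (k + 1)) *
    (algebraMap K E t - l - r)

section Inverse

variable {t s : K} {l r : E} {u : Eˣ} {N : ℕ}

theorem sylvesterInverse_mul_sub (h : Commute l r) (hu : (u : E) = classQuadratic t s r)
    (hl : classQuadratic t s l ^ N = 0) : sylvesterInverse t s l r u N * (l - r) = 1 := by
  have hcomm : Commute (classQuadratic t s l) (u : E) := hu ▸ commute_classQuadratic h t s
  rw [sylvesterInverse, mul_assoc, algebraMap_sub_sub_mul_sub h t s, ← hu,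
    sum_mul_unit_sub_of_pow_eq_zero hcomm hl]

theorem sub_mul_sylvesterInverse (h : Commute l r) (hu : (u : E) = classQuadratic t s r)
    (hl : classQuadratic t s l ^ N = 0) : (l - r) * sylvesterInverse t s l r u N = 1 := by
  have hcomm : Commute (classQuadratic t s l) (u : E) := hu ▸ commute_classQuadratic h t s
  have hright : (l - r) * ((algebraMap K E t - l - r) *
      ∑ k ∈ Finset.range N, classQuadratic t s l ^ k * (↑u⁻¹ : E) ^ (k + 1)) = 1 := by
    rw [← mul_assoc, sub_mul_algebraMap_sub_sub h t s, ← hu,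
      unit_sub_mul_sum_of_pow_eq_zero hcomm hl]
  rwa [left_inv_eq_right_inv (sylvesterInverse_mul_sub h hu hl) hright]

end Inverse

end Algebra

section Sylvester

variable {K R ι κ : Type*} [CommSemiring K] [Ring R] [Algebra K R] [Fintype ι] [DecidableEq ι]

theorem algebraMap_matrix_mul (c : K) (X : Matrix ι κ R) :
    algebraMap K (Matrix ι ι R) c * X = c • X := by
  rw [Algebra.algebraMap_eq_smul_one, Matrix.smul_mul, Matrix.one_mul]

theorem mul_algebraMap_matrix (c : K) (X : Matrix κ ι R) :
    X * algebraMap K (Matrix ι ι R) c = c • X := by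
  rw [Algebra.algebraMap_eq_smul_one, Matrix.mul_smul, Matrix.mul_one]

theorem mulLeftLinearMap_classQuadratic (t s : K) (A : Matrix ι ι R) :
    mulLeftLinearMap κ K (classQuadratic t s A) = classQuadratic t s (mulLeftLinearMap κ K A) := by
  ext1 X
  simp [classQuadratic, Matrix.add_mul, Matrix.sub_mul, Matrix.mul_assoc, algebraMap_matrix_mul]

theorem mulRightLinearMap_classQuadratic (t s : K) (B : Matrix ι ι R) :
    mulRightLinearMap κ K (classQuadratic t s B) =
      classQuadratic t s (mulRightLinearMap κ K B) := by
  ext1 X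
  simp [classQuadratic, Matrix.mul_add, Matrix.mul_sub, Algebra.commutes, mul_algebraMap_matrix,
    ← Matrix.mul_assoc]

variable (K κ) in
/-- Right multiplication by an invertible matrix, as an invertible endomorphism of the module of
rectangular matrices. -/
def mulRightUnit (U : (Matrix ι ι R)ˣ) : (Module.End K (Matrix κ ι R))ˣ where
  val := mulRightLinearMap κ K U
  inv := mulRightLinearMap κ K (↑U⁻¹ : Matrix ι ι R)
  val_inv := by ext1 X; simp [Matrix.mul_assoc]
  inv_val := by ext1 X; simp [Matrix.mul_assoc]

variable [Fintype κ] [DecidableEq κ]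

theorem sylvesterInverse_mulLeftLinearMap_mulRightLinearMap_apply (t s : K) (A : Matrix ι ι R)
    (B : Matrix κ κ R) (U : (Matrix κ κ R)ˣ) (N : ℕ) (C : Matrix ι κ R) :
    sylvesterInverse t s (mulLeftLinearMap κ K A) (mulRightLinearMap ι K B)
        (mulRightUnit K ι U) N C =
      ∑ k ∈ Finset.range N, classQuadratic t s A ^ k *
        ((algebraMap K (Matrix ι ι R) t - A) * C - C * B) * (↑U⁻¹ : Matrix κ κ R) ^ (k + 1) := by
  have hinv : (↑(mulRightUnit K ι U)⁻¹ : Module.End K (Matrix ι κ R)) =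
      mulRightLinearMap ι K (↑U⁻¹ : Matrix κ κ R) := rfl
  simp only [sylvesterInverse, hinv, ← mulLeftLinearMap_classQuadratic, pow_mulLeftLinearMap,
    pow_mulRightLinearMap, Module.End.mul_apply, LinearMap.sum_apply, LinearMap.sub_apply,
    Module.algebraMap_end_apply, mulLeftLinearMap_apply, mulRightLinearMap_apply, Matrix.sub_mul,
    algebraMap_matrix_mul, Matrix.mul_assoc]

theorem mul_sub_mul_eq_iff_of_classQuadratic_pow_eq_zero {t s : K} {A : Matrix ι ι R}
    {B : Matrix κ κ R} {U : (Matrix κ κ R)ˣ} {N : ℕ} (hA : classQuadratic t s A ^ N = 0)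
    (hU : (U : Matrix κ κ R) = classQuadratic t s B) (C X : Matrix ι κ R) :
    A * X - X * B = C ↔
      X = ∑ k ∈ Finset.range N, classQuadratic t s A ^ k *
        ((algebraMap K (Matrix ι ι R) t - A) * C - C * B) * (↑U⁻¹ : Matrix κ κ R) ^ (k + 1) := by
  have hcomm : Commute (mulLeftLinearMap κ K A) (mulRightLinearMap ι K B) :=
    commute_mulLeftLinearMap_mulRightLinearMap ..
  have hu : (mulRightUnit K ι U : Module.End K (Matrix ι κ R)) =
      classQuadratic t s (mulRightLinearMap ι K B) := by
    rw [← mulRightLinearMap_classQuadratic, ← hU]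
    rfl
  have hl : classQuadratic t s (mulLeftLinearMap κ K A) ^ N = 0 := by
    rw [← mulLeftLinearMap_classQuadratic, pow_mulLeftLinearMap, hA, mulLeftLinearMap_zero_eq_zero]
  rw [← sylvesterInverse_mulLeftLinearMap_mulRightLinearMap_apply]
  constructor
  · rintro rfl
    exact (LinearMap.congr_fun (sylvesterInverse_mul_sub hcomm hu hl) X).symm
  · rintro rfl
    exact LinearMap.congr_fun (sub_mul_sylvesterInverse hcomm hu hl) C

end Sylvester

section Nilpotent

variable {R : Type*} [Semiring R] {n : ℕ}

theorem pow_apply_eq_zero_of_strictLower {M : Matrix (Fin n) (Fin n) R}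
    (hM : ∀ i j, i ≤ j → M i j = 0) (k : ℕ) {i j : Fin n} (hij : (i : ℕ) < j + k) :
    (M ^ k) i j = 0 := by
  induction k generalizing j with
  | zero => exact Matrix.one_apply_ne (Fin.ne_of_lt (by simpa using hij))
  | succ k ih =>
    rw [pow_succ, Matrix.mul_apply]
    refine Finset.sum_eq_zero fun p _ => ?_
    rcases le_or_gt p j with hpj | hjp
    · rw [hM p j hpj, mul_zero]
    · rw [ih (by omega), zero_mul]

theorem pow_card_eq_zero_of_strictLower {M : Matrix (Fin n) (Fin n) R}
    (hM : ∀ i j, i ≤ j → M i j = 0) : M ^ n = 0 := by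
  ext i j
  exact pow_apply_eq_zero_of_strictLower hM n (by omega)

end Nilpotent

section Bidiagonal

variable {R : Type*} {n : ℕ}

/-- The lower bidiagonal matrix with diagonal `d` and constant first subdiagonal `c`; the paper's
`A` and `A′` are `lowerBidiagonal α 1` and `lowerBidiagonal ᾱ (-1)`. -/
def lowerBidiagonal [Zero R] (d : Fin n → R) (c : R) : Matrix (Fin n) (Fin n) R :=
  Matrix.of fun i j => if i = j then d i else if (i : ℕ) = (j : ℕ) + 1 then c else 0

theorem lowerBidiagonal_mul_apply [NonUnitalNonAssocSemiring R] {κ : Type*} (d : Fin n → R) (c : R)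
    (M : Matrix (Fin n) κ R) (i : Fin n) (j : κ) :
    (lowerBidiagonal d c * M) i j =
      d i * M i j + if 0 < (i : ℕ) then c * M ⟨i - 1, by omega⟩ j else 0 := by
  have hentry : ∀ p, lowerBidiagonal d c i p * M p j =
      (if i = p then d i * M p j else 0) + if (i : ℕ) = p + 1 then c * M p j else 0 := fun p => by
    rcases eq_or_ne i p with rfl | hip
    · simp [lowerBidiagonal]
    · simp [lowerBidiagonal, hip, ite_mul]
  rw [Matrix.mul_apply, Finset.sum_congr rfl fun p _ => hentry p, Finset.sum_add_distrib,
    Finset.sum_ite_eq, if_pos (Finset.mem_univ i)]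
  congr 1
  split_ifs with hi
  · rw [Finset.sum_eq_single ⟨i - 1, by omega⟩, if_pos (by simp only; omega)]
    · exact fun p _ hp => if_neg fun h => hp (Fin.ext (by simp only; omega))
    · exact fun h => absurd (Finset.mem_univ _) h
  · exact Finset.sum_eq_zero fun p _ => if_neg (by omega)

variable [Ring R]

/-- The paper's `Ã`, with an arbitrary family `b` in place of the quaternion conjugates of `a`. -/
def conjugateDefect (a b : Fin n → R) : Matrix (Fin n) (Fin n) R :=
  Matrix.of fun i j => if (i : ℕ) = (j : ℕ) + 1 then a j - b i
    else if (i : ℕ) = (j : ℕ) + 2 then 1 else 0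

theorem conjugateDefect_pow_card (a b : Fin n → R) : conjugateDefect a b ^ n = 0 :=
  pow_card_eq_zero_of_strictLower fun i j hij => by
    rw [conjugateDefect, Matrix.of_apply, if_neg (by omega), if_neg (by omega)]

theorem lowerBidiagonal_neg_one_mul_lowerBidiagonal_one (a b : Fin n → R) :
    lowerBidiagonal b (-1) * lowerBidiagonal a 1 =
      Matrix.diagonal (fun i => b i * a i) - conjugateDefect a b := by
  ext i j
  rw [lowerBidiagonal_mul_apply, Matrix.sub_apply, Matrix.diagonal_apply]
  simp only [lowerBidiagonal, conjugateDefect, Matrix.of_apply, Fin.ext_iff]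
  by_cases hij : (i : ℕ) = j + 1
  · have hpred : (⟨i - 1, by omega⟩ : Fin n) = j := Fin.ext (Nat.sub_eq_of_eq_add hij)
    split_ifs <;> first | omega | simp [hpred, sub_eq_add_neg]
  · split_ifs <;> first | omega | simp

section Algebra

variable {K : Type*} [CommSemiring K] [Algebra K R] {t s : K} {a b : Fin n → R}

theorem lowerBidiagonal_neg_one_eq (hadd : ∀ i, a i + b i = algebraMap K R t) :
    lowerBidiagonal b (-1) = algebraMap K (Matrix (Fin n) (Fin n) R) t - lowerBidiagonal a 1 := by
  ext i j
  rw [Matrix.sub_apply, Matrix.algebraMap_matrix_apply, ← hadd i]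
  simp only [lowerBidiagonal, Matrix.of_apply]
  split_ifs <;> simp

theorem classQuadratic_lowerBidiagonal (hadd : ∀ i, a i + b i = algebraMap K R t)
    (hmul : ∀ i, b i * a i = algebraMap K R s) :
    classQuadratic t s (lowerBidiagonal a 1) = conjugateDefect a b := by
  have hdiag : Matrix.diagonal (fun i => b i * a i) =
      algebraMap K (Matrix (Fin n) (Fin n) R) s := by
    simp only [hmul]
    rfl
  have hproduct := lowerBidiagonal_neg_one_mul_lowerBidiagonal_one a b
  rw [lowerBidiagonal_neg_one_eq hadd, hdiag, sub_mul] at hproduct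
  rw [classQuadratic, ← neg_sub, hproduct]
  abel

end Algebra

end Bidiagonal

theorem sylvester_bidiagonal_same_class_general {K R κ : Type*} [CommSemiring K] [Ring R]
    [Algebra K R] [Fintype κ] [DecidableEq κ] {n : ℕ} {t s : K} {a b : Fin n → R}
    (hadd : ∀ i, a i + b i = algebraMap K R t) (hmul : ∀ i, b i * a i = algebraMap K R s)
    {B : Matrix κ κ R} {U : (Matrix κ κ R)ˣ} (hU : (U : Matrix κ κ R) = classQuadratic t s B)
    (C X : Matrix (Fin n) κ R) :
    lowerBidiagonal a 1 * X - X * B = C ↔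
      X = ∑ k ∈ Finset.range n, conjugateDefect a b ^ k *
        (lowerBidiagonal b (-1) * C - C * B) * (↑U⁻¹ : Matrix κ κ R) ^ (k + 1) := by
  have hquad := classQuadratic_lowerBidiagonal hadd hmul
  rw [lowerBidiagonal_neg_one_eq hadd, ← hquad]
  exact mul_sub_mul_eq_iff_of_classQuadratic_pow_eq_zero (hquad ▸ conjugateDefect_pow_card a b) hU
    C X

theorem isConj_of_eq_inv_mul_mul {G₀ : Type*} [GroupWithZero G₀] {x y h : G₀} (hh : h ≠ 0)
    (hxy : x = h⁻¹ * y * h) : IsConj x y :=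
  GroupWithZero.isConj_iff₀.mpr ⟨h, hh, by simp [hxy, mul_assoc, hh]⟩

section Quaternion

variable {R : Type*} [CommRing R]

theorem re_eq_of_isConj {x y : ℍ[R]} (h : IsConj x y) : x.re = y.re := by
  obtain ⟨c, hc⟩ := h
  have hmul : ∀ p q : ℍ[R], (p * q).re = (q * p).re := fun p q => by
    simp only [Quaternion.re_mul]
    ring
  have hy : y = c * x * (↑c⁻¹ : ℍ[R]) := by rw [hc.eq, Units.mul_inv_cancel_right]
  rw [hy, hmul, Units.inv_mul_cancel_left]

theorem normSq_eq_of_isConj {x y : ℍ[R]} (h : IsConj x y) :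
    Quaternion.normSq x = Quaternion.normSq y :=
  isConj_iff_eq.mp (Quaternion.normSq.toMonoidHom.map_isConj h)

theorem add_star_eq_of_isConj {x y : ℍ[R]} (h : IsConj x y) :
    x + star x = algebraMap R ℍ[R] (2 * y.re) := by
  rw [Quaternion.self_add_star', re_eq_of_isConj h]
  rfl

theorem star_mul_eq_of_isConj {x y : ℍ[R]} (h : IsConj x y) :
    star x * x = algebraMap R ℍ[R] (Quaternion.normSq y) := by
  rw [Quaternion.star_mul_self, normSq_eq_of_isConj h]
  rfl

theorem classQuadratic_quaternion_matrix {κ : Type*} [Fintype κ] [DecidableEq κ] (x : ℍ[R])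
    (B : Matrix κ κ ℍ[R]) :
    classQuadratic (2 * x.re) (Quaternion.normSq x) B =
      B * B - Matrix.diagonal (fun _ => x + star x) * B +
        Matrix.diagonal (fun _ => ((Quaternion.normSq x : R) : ℍ[R])) := by
  rw [Quaternion.self_add_star']
  rfl

end Quaternion

/-- Let `α_1,…,α_n` lie in the same conjugacy class `V`, let `A`, `A′`, `Ã`
be as in the context (lower bidiagonal matrices), and let `B ∈ ℍ^{m×m}` be such that
`𝒳_V(B) = B² − (α_1+ᾱ_1)B + |α_1|² I_m` is invertible with (two-sided) inverse `W`.
Then `AX − XB = C` has the unique solution `X = Σ_{k=0}^{n−1} Ã^k (A′C − CB) W^{k+1}`.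
(Indices here are 0-based: `a k` is `α_{k+1}`.) -/
theorem sylvester_bidiagonal_same_class (n m : ℕ) (hn : 0 < n) (a : Fin n → ℍ[ℝ])
    (hconj : ∀ i j : Fin n, ∃ h : ℍ[ℝ], h ≠ 0 ∧ a i = h⁻¹ * a j * h)
    (A A' Atil : Matrix (Fin n) (Fin n) ℍ[ℝ])
    (hA : A = Matrix.of fun i j =>
      if i = j then a i else if (i : ℕ) = (j : ℕ) + 1 then 1 else 0)
    (hA' : A' = Matrix.of fun i j =>
      if i = j then star (a i) else if (i : ℕ) = (j : ℕ) + 1 then -1 else 0)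
    (hAtil : Atil = Matrix.of fun (i j : Fin n) =>
      if (i : ℕ) = (j : ℕ) + 1 then a j - star (a i)
      else if (i : ℕ) = (j : ℕ) + 2 then 1 else 0)
    (B : Matrix (Fin m) (Fin m) ℍ[ℝ])
    (chi : Matrix (Fin m) (Fin m) ℍ[ℝ])
    (hchi : chi = B * B - Matrix.diagonal (fun _ => a ⟨0, hn⟩ + star (a ⟨0, hn⟩)) * B +
      Matrix.diagonal (fun _ => ((Quaternion.normSq (a ⟨0, hn⟩) : ℝ) : ℍ[ℝ])))
    (W : Matrix (Fin m) (Fin m) ℍ[ℝ]) (hW : chi * W = 1 ∧ W * chi = 1)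
    (C : Matrix (Fin n) (Fin m) ℍ[ℝ])
    (X₀ : Matrix (Fin n) (Fin m) ℍ[ℝ])
    (hX₀ : X₀ = ∑ k ∈ Finset.range n, Atil ^ k * (A' * C - C * B) * W ^ (k + 1)) :
    A * X₀ - X₀ * B = C ∧
      ∀ X : Matrix (Fin n) (Fin m) ℍ[ℝ], A * X - X * B = C → X = X₀ := by
  subst hA hA' hAtil
  have hclass : ∀ i, IsConj (a i) (a ⟨0, hn⟩) := fun i =>
    have ⟨_, hh, hi⟩ := hconj i ⟨0, hn⟩
    isConj_of_eq_inv_mul_mul hh hi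
  have hsolution := sylvester_bidiagonal_same_class_general (U := ⟨chi, W, hW.1, hW.2⟩)
    (fun i => add_star_eq_of_isConj (hclass i)) (fun i => star_mul_eq_of_isConj (hclass i))
    (hchi.trans (classQuadratic_quaternion_matrix _ B).symm) C
  exact ⟨(hsolution X₀).mpr hX₀, fun X hX => ((hsolution X).mp hX).trans hX₀.symm⟩
end

section
/- Let A = [α_{i,j}]_{i,j=1}^{n} ∈ ℍ^{n×n} be lower triangular (α_{i,j} = 0 for i < j) and let B ∈ ℍ^{m×m} be such that 𝒳_{[α_{k,k}]}(B) := B² − (α_{k,k} + ᾱ_{k,k})B + |α_{k,k}|² I_m is invertible for k = 1, …, n. Then for every C ∈ ℍ^{n×m} with rows C̃_1, …, C̃_n, the equation AX − XB = C has a unique solution X whose rows X̃_k are defined recursively by X̃_1 = −(ρ_{ᾱ_{1,1}} C̃_1)^{e_r}(B) · (𝒳_{[α_{1,1}]}(B))⁻¹ and, for k = 2, …, n, X̃_k = −(ρ_{ᾱ_{k,k}} C̃_k)^{e_r}(B) · (𝒳_{[α_{k,k}]}(B))⁻¹ + Σ_{j=1}^{k−1} (ρ_{ᾱ_{k,k}}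 α_{k,j} X̃_j)^{e_r}(B) · (𝒳_{[α_{k,k}]}(B))⁻¹. -/
open Quaternion Matrix

/-!
Row `k` of `AX − XB = C` reads `ax − xB = d`, where `a = αₖₖ` and `d` is `C̃ₖ` minus a combination
of the earlier rows. Left multiplication by `a` commutes with right multiplication by `B`, and
`a + ā` and `āa` are central, so the operators `x ↦ xB − ax` and `x ↦ xB − āx` commute with product
`x ↦ x𝒳(B)`. Applying the second one to the row equation gives `x𝒳(B) = −(dB − ād)`. Conversely
`x = −(dB − ād)𝒳(B)⁻¹` solves the row equation because `𝒳(B)⁻¹` commutes with `B`. The rows are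
thus determined one after the other.
-/

theorem existsUnique_forall_eq_of_forall_lt {ι V : Type*} [Preorder ι] [WellFoundedLT ι]
    [Nonempty V] (F : ι → (ι → V) → V)
    (hF : ∀ k x y, (∀ j < k, x j = y j) → F k x = F k y) : ∃! x : ι → V, ∀ k, x k = F k x := by
  classical
  let x : ι → V := wellFounded_lt.fix fun k ih ↦
    F k fun j ↦ if h : j < k then ih j h else Classical.arbitrary V
  have hx (k : ι) : x k = F k x := by
    rw [show x k = _ from wellFounded_lt.fix_eq _ k]
    exact hF k _ _ fun j hj ↦ dif_pos hj
  refine ⟨x, hx, fun y hy ↦ funext fun k ↦ ?_⟩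
  induction k using WellFoundedLT.induction with
  | ind k ih => rw [hy, hx, hF k y x ih]

section Row

variable {R V : Type*} [Ring R] [AddCommGroup V] [Module R V]
  {a b : R} {T : Module.End R V} {χ : V ≃ₗ[R] V}

theorem map_symm_apply_of_quadratic
    (hχ : ∀ x, χ x = T (T x) - (a + b) • T x + (b * a) • x) (x : V) :
    T (χ.symm x) = χ.symm (T x) := by
  have map_apply (y : V) : T (χ y) = χ (T y) := by simp only [hχ, map_add, map_sub, map_smul]
  rw [χ.eq_symm_apply, ← map_apply, χ.apply_symm_apply]

theorem smul_sub_map_eq_iff (hab : Commute a b)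
    (hχ : ∀ x, χ x = T (T x) - (a + b) • T x + (b * a) • x) {x d : V} :
    a • x - T x = d ↔ x = -χ.symm (T d - b • d) := by
  constructor
  · rintro rfl
    have factor : χ x = -(T (a • x - T x) - b • (a • x - T x)) := by
      simp only [hχ, map_sub, map_smul, smul_sub, smul_smul, add_smul]
      abel
    rw [← map_neg, χ.eq_symm_apply, factor]
  · rintro rfl
    have factor : T (T d - b • d) - a • (T d - b • d) = χ d := by
      simp only [hχ, map_sub, map_smul, smul_sub, smul_smul, add_smul, hab.eq]
      abel
    rw [map_neg, map_symm_apply_of_quadratic hχ, smul_neg, ← map_smul, neg_sub_neg, ← map_sub,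
      factor, χ.symm_apply_apply]

end Row

theorem sum_smul_of_isLowerTriangular {R V n : Type*} [Semiring R] [AddCommMonoid V]
    [Module R V] [Fintype n] [LinearOrder n] {A : Matrix n n R} (hA : A.IsLowerTriangular)
    (X : n → V) (k : n) :
    ∑ j, A k j • X j = A k k • X k + ∑ j with j < k, A k j • X j := by
  rw [← Finset.sum_filter_add_sum_filter_not Finset.univ (· < k), add_comm]
  congr 1
  refine Finset.sum_eq_single_of_mem k (by simp) fun j hj hjk ↦ ?_
  have hkj : k < j := lt_of_le_of_ne (by simpa using hj) hjk.symm
  rw [hA hkj, zero_smul]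

section TriangularSystem

variable {R V n : Type*} [Ring R] [AddCommGroup V] [Module R V] [Fintype n] [LinearOrder n]
  {A : Matrix n n R} {b : n → R} {T : Module.End R V} {χ : n → V ≃ₗ[R] V}

theorem forall_sum_smul_sub_map_eq_iff (hA : A.IsLowerTriangular)
    (hab : ∀ k, Commute (A k k) (b k))
    (hχ : ∀ k x, χ k x = T (T x) - (A k k + b k) • T x + (b k * A k k) • x) {X C : n → V} :
    (∀ k, ∑ j, A k j • X j - T (X k) = C k) ↔
      ∀ k, X k = -(χ k).symm (T (C k) - b k • C k) +
        ∑ j with j < k, (χ k).symm (T (A k j • X j) - b k • A k j • X j) := by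
  refine forall_congr' fun k ↦ ?_
  calc ∑ j, A k j • X j - T (X k) = C k
      ↔ A k k • X k - T (X k) = C k - ∑ j with j < k, A k j • X j := by
        rw [sum_smul_of_isLowerTriangular hA, add_sub_right_comm, eq_sub_iff_add_eq]
    _ ↔ _ := by
        rw [smul_sub_map_eq_iff (hab k) (hχ k)]
        simp only [map_sub, map_sum, Finset.smul_sum, smul_sub, Finset.sum_sub_distrib]
        exact Eq.congr_right (by abel)

theorem existsUnique_forall_sum_smul_sub_map_eq (hA : A.IsLowerTriangular)
    (hab : ∀ k, Commute (A k k) (b k))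
    (hχ : ∀ k x, χ k x = T (T x) - (A k k + b k) • T x + (b k * A k k) • x) (C : n → V) :
    ∃! X : n → V, ∀ k, ∑ j, A k j • X j - T (X k) = C k := by
  simp only [forall_sum_smul_sub_map_eq_iff hA hab hχ]
  refine existsUnique_forall_eq_of_forall_lt _ fun k X Y hXY ↦ ?_
  congr 1
  refine Finset.sum_congr rfl fun j hj ↦ ?_
  rw [hXY j (by simpa using hj)]

end TriangularSystem

section Matrix

variable {R n m : Type*} [Ring R] [Fintype m]

theorem mul_sub_mul_eq_iff_forall_row [Fintype n] {A : Matrix n n R} {B : Matrix m m R}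
    {X C : Matrix n m R} :
    A * X - X * B = C ↔ ∀ k, ∑ j, A k j • X j - X k ᵥ* B = C k := by
  simp only [← vecMul_eq_sum]
  exact funext_iff

variable [DecidableEq m]

/-- The value at `B` of `(z - a)(z - b) = z² - z(a + b) + ba` for commuting `a` and `b`. With
`b = ā` this is the `𝒳_{[a]}(B)` of the quaternionic theory. -/
def quadraticEval (a b : R) (B : Matrix m m R) : Matrix m m R :=
  B * B - diagonal (fun _ ↦ a + b) * B + diagonal fun _ ↦ b * a

theorem vecMul_diagonal_const_of_mem_center {c : R} (hc : c ∈ Subring.center R) (x : m → R) :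
    x ᵥ* diagonal (fun _ ↦ c) = c • x := by
  ext j
  rw [vecMul_diagonal, Pi.smul_apply, smul_eq_mul, Subring.mem_center_iff.mp hc]

theorem vecMul_quadraticEval {a b : R} (hadd : a + b ∈ Subring.center R)
    (hmul : b * a ∈ Subring.center R) (B : Matrix m m R) (x : m → R) :
    x ᵥ* quadraticEval a b B = x ᵥ* B ᵥ* B - (a + b) • x ᵥ* B + (b * a) • x := by
  rw [quadraticEval, vecMul_add, vecMul_sub, ← vecMul_vecMul, ← vecMul_vecMul,
    vecMul_diagonal_const_of_mem_center hadd, vecMul_diagonal_const_of_mem_center hmul,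
    smul_vecMul]

theorem sylvester_lower_triangular_general [Fintype n] [LinearOrder n] {A : Matrix n n R}
    (hA : A.IsLowerTriangular) (B : Matrix m m R) {b : n → R}
    (hadd : ∀ k, A k k + b k ∈ Subring.center R) (hmul : ∀ k, b k * A k k ∈ Subring.center R)
    {W : n → Matrix m m R}
    (hW : ∀ k, quadraticEval (A k k) (b k) B * W k = 1 ∧ W k * quadraticEval (A k k) (b k) B = 1)
    (C : Matrix n m R) :
    (∃! X : Matrix n m R, A * X - X * B = C) ∧
      ∀ X : Matrix n m R, A * X - X * B = C ↔
        ∀ k, X k = -((C k ᵥ* B - b k • C k) ᵥ* W k) +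
          ∑ j with j < k, ((A k j • X j) ᵥ* B - b k • A k j • X j) ᵥ* W k := by
  let χ (k : n) : (m → R) ≃ₗ[R] m → R := toLinearEquivRight'OfInv (hW k).2 (hW k).1
  have hab (k : n) : Commute (A k k) (b k) := by
    have hsum : Commute (A k k) (A k k + b k) := Subring.mem_center_iff.mp (hadd k) (A k k)
    simpa using hsum.sub_right (.refl (A k k))
  have hχ (k : n) (x : m → R) : χ k x = B.vecMulLinear (B.vecMulLinear x) -
      (A k k + b k) • B.vecMulLinear x + (b k * A k k) • x :=
    vecMul_quadraticEval (hadd k) (hmul k) B x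
  simp only [mul_sub_mul_eq_iff_forall_row]
  exact ⟨existsUnique_forall_sum_smul_sub_map_eq hA hab hχ C,
    fun X ↦ forall_sum_smul_sub_map_eq_iff hA hab hχ⟩

end Matrix

section Quaternion

variable {R : Type*} [CommRing R] {c₁ c₂ c₃ : R}

theorem quaternionAlgebra_coe_mem_center (r : R) :
    (r : ℍ[R,c₁,c₂,c₃]) ∈ Subring.center ℍ[R,c₁,c₂,c₃] :=
  Subring.mem_center_iff.mpr fun a ↦ (QuaternionAlgebra.coe_commutes r a).symm

theorem self_add_star_mem_center (a : ℍ[R,c₁,c₂,c₃]) :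
    a + star a ∈ Subring.center ℍ[R,c₁,c₂,c₃] :=
  a.self_add_star' ▸ quaternionAlgebra_coe_mem_center _

theorem star_mul_self_mem_center (a : ℍ[R,c₁,c₂,c₃]) :
    star a * a ∈ Subring.center ℍ[R,c₁,c₂,c₃] :=
  a.star_mul_eq_coe ▸ quaternionAlgebra_coe_mem_center _

end Quaternion

/-- Let `A ∈ ℍ^{n×n}` be lower triangular and let `B ∈ ℍ^{m×m}` be such
that each `𝒳_{[α_{k,k}]}(B) = B² − (α_{k,k}+ᾱ_{k,k})B + |α_{k,k}|² I_m` is invertible, with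
two-sided inverse `W k`.  Then `AX − XB = C` has a unique solution `X`, whose rows satisfy
`X̃_k = −(ρ_{ᾱ_{k,k}} C̃_k)^{e_r}(B) (𝒳_{[α_{k,k}]}(B))⁻¹
      + Σ_{j<k} (ρ_{ᾱ_{k,k}} α_{k,j} X̃_j)^{e_r}(B) (𝒳_{[α_{k,k}]}(B))⁻¹`
(for `k = 0` the sum is empty, giving the initial row).  Here
`(ρ_ᾱ D)^{e_r}(B) = DB − ᾱD` for a row vector `D`, and rows are indexed from 0. -/
theorem sylvester_lower_triangular (n m : ℕ)
    (A : Matrix (Fin n) (Fin n) ℍ[ℝ]) (hA : ∀ i j : Fin n, i < j → A i j = 0)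
    (B : Matrix (Fin m) (Fin m) ℍ[ℝ])
    (chi : Fin n → Matrix (Fin m) (Fin m) ℍ[ℝ])
    (hchi : ∀ k, chi k = B * B - Matrix.diagonal (fun _ => A k k + star (A k k)) * B +
      Matrix.diagonal (fun _ => ((Quaternion.normSq (A k k) : ℝ) : ℍ[ℝ])))
    (W : Fin n → Matrix (Fin m) (Fin m) ℍ[ℝ])
    (hW : ∀ k, chi k * W k = 1 ∧ W k * chi k = 1)
    (C : Matrix (Fin n) (Fin m) ℍ[ℝ]) :
    (∃! X : Matrix (Fin n) (Fin m) ℍ[ℝ], A * X - X * B = C) ∧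
      ∀ X : Matrix (Fin n) (Fin m) ℍ[ℝ], A * X - X * B = C →
        ∀ k : Fin n, (Matrix.of fun (_ : Fin 1) jc => X k jc) =
          -(((Matrix.of fun (_ : Fin 1) jc => C k jc) * B -
              star (A k k) • Matrix.of fun (_ : Fin 1) jc => C k jc) * W k) +
            ∑ j : Fin n, if j < k then
              ((A k j • Matrix.of fun (_ : Fin 1) jc => X j jc) * B -
                star (A k k) • (A k j • Matrix.of fun (_ : Fin 1) jc => X j jc)) * W k
            else 0 := by
  obtain rfl : chi = fun k ↦ quadraticEval (A k k) (star (A k k)) B :=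
    funext fun k ↦ by rw [hchi, quadraticEval, Quaternion.star_mul_self]
  obtain ⟨existsUnique_solution, solution_iff⟩ :=
    sylvester_lower_triangular_general (fun i j ↦ hA i j) B
      (fun k ↦ self_add_star_mem_center (A k k)) (fun k ↦ star_mul_self_mem_center (A k k)) hW C
  refine ⟨existsUnique_solution, fun X hX k ↦ ?_⟩
  rw [← Finset.sum_filter]
  ext1 _ j
  have entry := congrFun ((solution_iff X).mp hX k) j
  rw [Pi.add_apply, Finset.sum_apply] at entry
  rw [Matrix.add_apply, Matrix.sum_apply]
  exact entry
end

section
/- Let α and β be conjugate non-real quaternions, let n ≥ m ≥ 1, let A = 𝒥_n(α) and B = 𝒥_m(β)ᵀ be quaternion Jordan blocks, and let C = [c_{k,j}] ∈ ℍ^{n×m}. With the convention c_{k,j} = 0 when k ≤ 0 or j ≤ 0, set d_{k,j} = c_{k,j}β − ᾱc_{k,j} + c_{k−1,j} + c_{k,j−1}, with the convention d_{k,j} = 0 when k ≤ 0 or j ≤ 0. Then the Sylvester equation AX − XB = C has a solution X ∈ ℍ^{n×m} if and only if, for every j = 1, …, m, Σ_{ℓ ≥ 0} Im(α)·d_{2ℓ+1,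 j−2ℓ} + Σ_{ℓ ≥ 1} d_{2ℓ, j−2ℓ+1}·Im(β) = 0 (both sums are finite since terms with a nonpositive index vanish). -/
open Quaternion Matrix

/-!
Write `α = a + u` and `β = a + v` with `a` central and `u² = v² = s` central and `2s`
invertible. Let `T` be left multiplication by `u`, `S` right multiplication by `v`, and let `P`,
`Q` be the shifts in the row and the column index. The Sylvester equation then reads
`(T - S + P - Q) x = c`, and `d` is `(T + S + P + Q) c`. All four operators commute, so if `x` is a
solution then `d = ((T + P)² - (S + Q)²) x = (2TP + P² - 2SQ - Q²) x`, because `T² = S²`; applying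
`T` to the odd rows of `d` and `S` to the even ones makes this telescope to `0` along each
antidiagonal.

Conversely, every array is the sum of `T y - S y` and an element of `ker (T - S)`, and the second
summand can be moved up one row, absorbed by the shift `P`. Hence every `c` is of the form
`(T - S + P - Q) x` up to a first row `k` with entries in `ker (T - S)`. The conditions on such a
row, `2s k_j + 2 T k_{j-1} = 0`, form a triangular system with only the zero solution. Since the
`j`-th condition only involves the first `j` rows and columns of `c`, and `m ≤ n`, the matrices may
be replaced by infinite arrays throughout.
-/

section Arrays

/-- The convention that the entries with a nonpositive index of an array indexed from `1` are `0`.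
Under it, the truncated index `i - 1` yields the zero-padded shift also at `i = 0`. -/
structure VanishesOnAxes {R : Type*} [Zero R] (x : ℕ → ℕ → R) : Prop where
  row_zero : ∀ j, x 0 j = 0
  col_zero : ∀ i, x i 0 = 0

variable {R : Type*} [Ring R]

/-- The entries of `AX - XB` for the Jordan blocks `A = 𝒥_n(u)` and `B = 𝒥_m(v)ᵀ`, as an operator on
arrays indexed from `1`; see `jordanBlock_mul_sub_mul_transpose_jordanBlock`. -/
def sylvesterArray (u v : R) (x : ℕ → ℕ → R) (i j : ℕ) : R :=
  u * x i j - x i j * v + x (i - 1) j - x i (j - 1)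

/-- The passage from the right-hand side `c` to the array `d` of the criterion: the cofactor which
turns `sylvesterArray u v` into a difference of two squares. -/
def cosylvesterArray (u v : R) (c : ℕ → ℕ → R) (i j : ℕ) : R :=
  u * c i j + c i j * v + c (i - 1) j + c i (j - 1)

/-- The `j`-th solvability condition of the Sylvester equation, as a function of the right-hand side
`c`. The `ℓ`-th term of the first sum of the criterion is paired with the `(ℓ + 1)`-st term of the
second sum. -/
def sylvesterObstruction (u v : R) (c : ℕ → ℕ → R) (j : ℕ) : R :=
  ∑ ℓ ∈ Finset.range (j + 1),
    (u * cosylvesterArray u v c (2 * ℓ + 1) (j - 2 * ℓ) +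
      cosylvesterArray u v c (2 * ℓ + 2) (j - 2 * ℓ - 1) * v)

/-- The array with first row `k` and all other rows zero. -/
def firstRowArray (k : ℕ → R) (i j : ℕ) : R :=
  if i = 1 then k j else 0

variable {u v : R} {c c' x : ℕ → ℕ → R}

lemma VanishesOnAxes.sylvesterArray (hx : VanishesOnAxes x) :
    VanishesOnAxes (sylvesterArray u v x) where
  row_zero j := by simp [_root_.sylvesterArray, hx.row_zero]
  col_zero i := by simp [_root_.sylvesterArray, hx.col_zero]

lemma cosylvesterArray_col_zero (hc : ∀ i, c i 0 = 0) (i : ℕ) : cosylvesterArray u v c i 0 = 0 := by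
  simp [cosylvesterArray, hc]

lemma sylvesterObstruction_add (j : ℕ) :
    sylvesterObstruction u v (c + c') j =
      sylvesterObstruction u v c j + sylvesterObstruction u v c' j := by
  rw [sylvesterObstruction, sylvesterObstruction, sylvesterObstruction, ← Finset.sum_add_distrib]
  refine Finset.sum_congr rfl fun ℓ _ => ?_
  simp only [cosylvesterArray, Pi.add_apply, mul_add, add_mul]
  abel

lemma sylvesterObstruction_congr (hc : VanishesOnAxes c) (hc' : VanishesOnAxes c') {j : ℕ}
    (h : ∀ i k, i < j → k < j → c (i + 1) (k + 1) = c' (i + 1) (k + 1)) :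
    sylvesterObstruction u v c j = sylvesterObstruction u v c' j := by
  have eq_of_le : ∀ i k, i ≤ j → k ≤ j → c i k = c' i k := by
    rintro (_ | i) (_ | k) hi hk
    · rw [hc.row_zero, hc'.row_zero]
    · rw [hc.row_zero, hc'.row_zero]
    · rw [hc.col_zero, hc'.col_zero]
    · exact h i k hi hk
  have cosylvester_eq : ∀ i k, i + k ≤ j + 1 ∨ k = 0 →
      cosylvesterArray u v c i k = cosylvesterArray u v c' i k := by
    rintro i (_ | k) hik
    · rw [cosylvesterArray_col_zero hc.col_zero, cosylvesterArray_col_zero hc'.col_zero]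
    · rcases i with _ | i
      · simp [cosylvesterArray, hc.row_zero, hc'.row_zero]
      · simp only [cosylvesterArray]
        rw [eq_of_le (i + 1) (k + 1) (by lia) (by lia), eq_of_le (i + 1 - 1) (k + 1) (by lia)
          (by lia), eq_of_le (i + 1) (k + 1 - 1) (by lia) (by lia)]
  refine Finset.sum_congr rfl fun ℓ _ => ?_
  rw [cosylvester_eq _ (j - 2 * ℓ) (by lia), cosylvester_eq _ (j - 2 * ℓ - 1) (by lia)]

end Arrays

section Criterion

variable {K R : Type*} [CommRing K] [Ring R] [Algebra K R] {s : K} {u v : R} {c x : ℕ → ℕ → R}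

lemma mul_left_twice_eq_smul (hu : u * u = algebraMap K R s) (t : R) :
    u * (u * t) = s • t := by
  rw [← mul_assoc, hu, Algebra.smul_def]

lemma mul_right_twice_eq_smul (hv : v * v = algebraMap K R s) (t : R) :
    t * v * v = s • t := by
  rw [mul_assoc, hv, Algebra.smul_def, Algebra.commutes]

lemma cosylvesterArray_sylvesterArray (hu : u * u = algebraMap K R s)
    (hv : v * v = algebraMap K R s) (i j : ℕ) :
    cosylvesterArray u v (sylvesterArray u v x) i j =
      (2 : K) • (u * x (i - 1) j) + x (i - 2) j - (2 : K) • (x i (j - 1) * v) - x i (j - 2) := by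
  simp only [cosylvesterArray, sylvesterArray, mul_add, add_mul, mul_sub, sub_mul,
    ← mul_assoc u _ v, mul_left_twice_eq_smul hu, mul_right_twice_eq_smul hv, Nat.sub_sub]
  module

theorem sylvesterObstruction_sylvesterArray (hu : u * u = algebraMap K R s)
    (hv : v * v = algebraMap K R s) (hx : VanishesOnAxes x) (j : ℕ) :
    sylvesterObstruction u v (sylvesterArray u v x) j = 0 := by
  let F : ℕ → R := fun ℓ => (2 * s) • x (2 * ℓ) (j - 2 * ℓ) + u * x (2 * ℓ - 1) (j - 2 * ℓ) +
    x (2 * ℓ) (j - (2 * ℓ + 1)) * v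
  have telescopes : ∀ ℓ,
      u * cosylvesterArray u v (sylvesterArray u v x) (2 * ℓ + 1) (j - 2 * ℓ) +
        cosylvesterArray u v (sylvesterArray u v x) (2 * ℓ + 2) (j - 2 * ℓ - 1) * v =
      F ℓ - F (ℓ + 1) := by
    intro ℓ
    simp only [F, cosylvesterArray_sylvesterArray hu hv, Nat.sub_sub, mul_add, add_mul, mul_sub,
      sub_mul, mul_smul_comm, smul_mul_assoc, ← mul_assoc u _ v, mul_left_twice_eq_smul hu,
      mul_right_twice_eq_smul hv, Nat.add_sub_cancel, Nat.reduceSubDiff, mul_one, add_assoc,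
      Nat.reduceAdd]
    module
  have F_zero : F 0 = 0 := by simp [F, hx.row_zero]
  have F_succ : F (j + 1) = 0 := by
    have hj : j - 2 * (j + 1) = 0 ∧ j - (2 * (j + 1) + 1) = 0 := by lia
    simp [F, hj, hx.col_zero]
  simp only [sylvesterObstruction, telescopes]
  rw [Finset.sum_range_sub', F_zero, F_succ, sub_zero]

lemma sylvesterObstruction_firstRowArray (hu : u * u = algebraMap K R s) {k : ℕ → R}
    (hk : ∀ j, u * k j = k j * v) (j : ℕ) :
    sylvesterObstruction u v (firstRowArray k) j = (2 : K) • (s • k j + u * k (j - 1)) := by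
  have later_rows : ∀ i l, 3 ≤ i → cosylvesterArray u v (firstRowArray k) i l = 0 := by
    intro i l hi
    simp [cosylvesterArray, firstRowArray, show i ≠ 1 by lia, show i - 1 ≠ 1 by lia]
  rw [sylvesterObstruction, Finset.sum_eq_single 0]
  · simp only [cosylvesterArray, firstRowArray, mul_zero, zero_add, ↓reduceIte, tsub_zero, ← hk,
      tsub_self, zero_ne_one, add_zero, mul_add, mul_left_twice_eq_smul hu,
      OfNat.ofNat_ne_one, zero_mul, Nat.add_one_sub_one, smul_add]
    module
  · intro ℓ _ hℓ
    rw [later_rows _ _ (by lia), later_rows _ _ (by lia), mul_zero, zero_mul, add_zero]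
  · simp

lemma eq_zero_of_sylvesterObstruction_firstRowArray (hs : IsUnit (2 * s))
    (hu : u * u = algebraMap K R s) {k : ℕ → R} (hk : ∀ j, u * k j = k j * v) (hk0 : k 0 = 0)
    {m : ℕ} (h : ∀ j, 1 ≤ j → j ≤ m → sylvesterObstruction u v (firstRowArray k) j = 0) :
    ∀ j ≤ m, k j = 0
  | 0, _ => hk0
  | j + 1, hj => by
    have previous : k j = 0 :=
      eq_zero_of_sylvesterObstruction_firstRowArray hs hu hk hk0 h j (by lia)
    have condition := h (j + 1) (by lia) hj
    rwa [sylvesterObstruction_firstRowArray hu hk, Nat.add_sub_cancel, previous, mul_zero, add_zero,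
      smul_smul, hs.smul_eq_zero] at condition

lemma exists_eq_intertwiner_add (hs : IsUnit (2 * s)) (hu : u * u = algebraMap K R s)
    (hv : v * v = algebraMap K R s) (f : R) :
    ∃ k w : R, u * k = k * v ∧ f = k + (u * w - w * v) := by
  obtain ⟨t, ht⟩ := hs.exists_left_inv
  -- `(T + S)² / 4s` and `(T - S)² / 4s` are complementary projections, and the image of the first
  -- one is `ker (T - S)`.
  refine ⟨t • (s • f + u * f * v), (t * t * s) • (u * f - f * v), ?_, ?_⟩ <;>
    simp only [mul_smul_comm, smul_mul_assoc, mul_add, add_mul, mul_sub, sub_mul, ← mul_assoc u _ v,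
      mul_left_twice_eq_smul hu, mul_right_twice_eq_smul hv]
  · module
  · match_scalars
    · linear_combination (-1 - t * s) * ht
    · linear_combination t * ht

/-- The kernel part of each entry of `f` is absorbed by the next higher entry of the solution; the
one of the first entry remains as `y 0`. -/
lemma exists_column_solution (hs : IsUnit (2 * s)) (hu : u * u = algebraMap K R s)
    (hv : v * v = algebraMap K R s) (f : ℕ → R) :
    ∃ y : ℕ → R, u * y 0 = y 0 * v ∧
      ∀ i, f (i + 1) = u * y (i + 1) - y (i + 1) * v + y i := by
  choose k w hk hkw using exists_eq_intertwiner_add (R := R) hs hu hv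
  let a : ℕ → R := Nat.rec 0 fun i p => w (f (i + 1) - p)
  have a_succ (i : ℕ) : a (i + 1) = w (f (i + 1) - a i) := rfl
  refine ⟨fun i => a i + k (f (i + 1) - a i), by simp [a, hk], fun i => ?_⟩
  have split := hkw (f (i + 1) - a i)
  rw [← a_succ, sub_eq_iff_eq_add] at split
  simp only [mul_add, add_mul, hk]
  nth_rw 1 [split]
  abel

lemma exists_array_solution (hs : IsUnit (2 * s)) (hu : u * u = algebraMap K R s)
    (hv : v * v = algebraMap K R s) (c : ℕ → ℕ → R) :
    ∃ y : ℕ → ℕ → R, (∀ i, y i 0 = 0) ∧ (∀ j, u * y 0 j = y 0 j * v) ∧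
      ∀ i j, c (i + 1) (j + 1) = sylvesterArray u v y (i + 1) (j + 1) := by
  choose col hcol0 hcol using exists_column_solution (R := R) hs hu hv
  let z : ℕ → ℕ → R := Nat.rec 0 fun j p => col fun i => c i (j + 1) + p i
  have z_succ (j : ℕ) : z (j + 1) = col fun i => c i (j + 1) + z j i := rfl
  refine ⟨fun i j => z j i, fun i => rfl, ?_, fun i j => ?_⟩
  · rintro (_ | j)
    · simp [z]
    · simp only [z_succ, hcol0]
  · have column_eq := hcol (fun i => c i (j + 1) + z j i) i
    rw [← z_succ] at column_eq
    exact eq_sub_of_add_eq column_eq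

lemma exists_eq_sylvesterArray_add_firstRowArray (hs : IsUnit (2 * s))
    (hu : u * u = algebraMap K R s) (hv : v * v = algebraMap K R s) (hc : VanishesOnAxes c) :
    ∃ (x : ℕ → ℕ → R) (k : ℕ → R), VanishesOnAxes x ∧ k 0 = 0 ∧ (∀ j, u * k j = k j * v) ∧
      c = sylvesterArray u v x + firstRowArray k := by
  obtain ⟨y, hy0, hyk, hy⟩ := exists_array_solution hs hu hv c
  have hx : VanishesOnAxes fun i j => if i = 0 then 0 else y i j :=
    ⟨by simp, by simp [hy0]⟩
  refine ⟨_, y 0, hx, hy0 0, hyk, funext₂ ?_⟩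
  rintro (_ | i) (_ | j)
  · simp [hc.row_zero, hx.sylvesterArray.row_zero, firstRowArray]
  · simp [hc.row_zero, hx.sylvesterArray.row_zero, firstRowArray]
  · simp [hc.col_zero, hx.sylvesterArray.col_zero, firstRowArray, hy0]
  · rw [hy]
    rcases i with _ | i
    · simp only [sylvesterArray, firstRowArray, zero_add, tsub_self, add_tsub_cancel_right,
        Pi.add_apply, one_ne_zero, ↓reduceIte, add_zero]
      abel
    · simp [sylvesterArray, firstRowArray]

theorem exists_sylvesterArray_eq_iff (hs : IsUnit (2 * s)) (hu : u * u = algebraMap K R s)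
    (hv : v * v = algebraMap K R s) (hc : VanishesOnAxes c) {n m : ℕ} (hmn : m ≤ n) :
    (∃ x, VanishesOnAxes x ∧
      ∀ i j, i < n → j < m → sylvesterArray u v x (i + 1) (j + 1) = c (i + 1) (j + 1)) ↔
      ∀ j, 1 ≤ j → j ≤ m → sylvesterObstruction u v c j = 0 := by
  constructor
  · rintro ⟨x, hx, hxc⟩ j - hj
    rw [← sylvesterObstruction_congr hx.sylvesterArray hc fun i k hi hk =>
      hxc i k (by lia) (by lia)]
    exact sylvesterObstruction_sylvesterArray hu hv hx j
  · intro h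
    obtain ⟨x, k, hx, hk0, hk, rfl⟩ := exists_eq_sylvesterArray_add_firstRowArray hs hu hv hc
    simp only [sylvesterObstruction_add, sylvesterObstruction_sylvesterArray hu hv hx,
      zero_add] at h
    have k_eq_zero := eq_zero_of_sylvesterObstruction_firstRowArray hs hu hk hk0 h
    exact ⟨x, hx, fun i j _ hj => by simp [firstRowArray, k_eq_zero (j + 1) hj]⟩

end Criterion

section ArrayBlock

variable {R : Type*} {n m : ℕ}

/-- The `n × m` matrix whose entries, counted from `1`, are those of the array `x`. -/
def arrayBlock (n m : ℕ) (x : ℕ → ℕ → R) : Matrix (Fin n) (Fin m) R :=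
  Matrix.of fun i j => x (i + 1) (j + 1)

lemma arrayBlock_eq_iff {x y : ℕ → ℕ → R} :
    arrayBlock n m x = arrayBlock n m y ↔
      ∀ i j, i < n → j < m → x (i + 1) (j + 1) = y (i + 1) (j + 1) :=
  ⟨fun h i j hi hj => congr_fun₂ h ⟨i, hi⟩ ⟨j, hj⟩,
    fun h => Matrix.ext fun i j => h i j i.is_lt j.is_lt⟩

lemma exists_arrayBlock_eq [Zero R] (X : Matrix (Fin n) (Fin m) R) :
    ∃ x, VanishesOnAxes x ∧ arrayBlock n m x = X := by
  refine ⟨fun i j => if h : (1 ≤ i ∧ i ≤ n) ∧ 1 ≤ j ∧ j ≤ m then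
    X ⟨i - 1, by lia⟩ ⟨j - 1, by lia⟩ else 0, ⟨by simp, by simp⟩, ?_⟩
  ext i j
  simp [arrayBlock]

end ArrayBlock

section JordanBlock

variable {R : Type*} [Ring R] {n m : ℕ}

/-- The matrix `F_n`, with ones on the first subdiagonal and zeros elsewhere. -/
def lowerShift (R : Type*) [Zero R] [One R] (n : ℕ) : Matrix (Fin n) (Fin n) R :=
  Matrix.of fun i j => if (i : ℕ) = j + 1 then 1 else 0

/-- The lower triangular Jordan block `𝒥_n(a) = a I_n + F_n`. -/
def jordanBlock (n : ℕ) (a : R) : Matrix (Fin n) (Fin n) R :=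
  Matrix.diagonal (fun _ => a) + lowerShift R n

lemma jordanBlock_eq_of (a : R) :
    jordanBlock n a = Matrix.of fun i j : Fin n =>
      if (i : ℕ) = j then a else if (i : ℕ) = j + 1 then 1 else 0 := by
  ext i j
  by_cases h : i = j <;> simp [jordanBlock, lowerShift, h, Fin.val_inj]

lemma transpose_jordanBlock_eq_of (a : R) :
    (jordanBlock n a)ᵀ = Matrix.of fun i j : Fin n =>
      if (i : ℕ) = j then a else if (j : ℕ) = i + 1 then 1 else 0 := by
  ext i j
  simp [jordanBlock_eq_of, eq_comm (a := (j : ℕ)) (b := i)]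

lemma sum_fin_ite_eq_succ {M : Type*} [AddCommMonoid M] {f : ℕ → M} (hf : f 0 = 0) {i : ℕ}
    (hi : i ≤ n) : (∑ k : Fin n, if i = (k : ℕ) + 1 then f (k + 1) else 0) = f i := by
  rw [Fin.sum_univ_eq_sum_range fun k => if i = k + 1 then f (k + 1) else 0]
  rcases i with _ | i
  · simp [hf]
  · simp [Nat.succ_le_iff.1 hi]

lemma lowerShift_mul_arrayBlock {x : ℕ → ℕ → R} (hx : ∀ j, x 0 j = 0) :
    lowerShift R n * arrayBlock n m x = arrayBlock n m fun i j => x (i - 1) j := by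
  ext i j
  rw [Matrix.mul_apply]
  simpa [lowerShift, arrayBlock] using
    sum_fin_ite_eq_succ (f := fun k => x k (j + 1)) (hx _) i.is_lt.le

lemma arrayBlock_mul_transpose_lowerShift {x : ℕ → ℕ → R} (hx : ∀ i, x i 0 = 0) :
    arrayBlock n m x * (lowerShift R m)ᵀ = arrayBlock n m fun i j => x i (j - 1) := by
  ext i j
  rw [Matrix.mul_apply]
  simpa [lowerShift, arrayBlock] using
    sum_fin_ite_eq_succ (f := x (i + 1)) (hx _) j.is_lt.le

lemma jordanBlock_mul_sub_mul_transpose_jordanBlock (a b : R) {x : ℕ → ℕ → R}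
    (hx : VanishesOnAxes x) :
    jordanBlock n a * arrayBlock n m x - arrayBlock n m x * (jordanBlock m b)ᵀ =
      arrayBlock n m (sylvesterArray a b x) := by
  rw [jordanBlock, jordanBlock, Matrix.transpose_add, Matrix.diagonal_transpose, Matrix.add_mul,
    Matrix.mul_add, lowerShift_mul_arrayBlock hx.row_zero,
    arrayBlock_mul_transpose_lowerShift hx.col_zero]
  ext i j
  simp only [arrayBlock, sylvesterArray, Matrix.sub_apply, Matrix.add_apply, diagonal_mul,
    mul_diagonal, of_apply, add_tsub_cancel_right]
  abel

theorem exists_jordanBlock_sylvester_eq_iff (a b : R) (c : ℕ → ℕ → R) :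
    (∃ X : Matrix (Fin n) (Fin m) R,
      jordanBlock n a * X - X * (jordanBlock m b)ᵀ = arrayBlock n m c) ↔
      ∃ x, VanishesOnAxes x ∧
        ∀ i j, i < n → j < m → sylvesterArray a b x (i + 1) (j + 1) = c (i + 1) (j + 1) := by
  constructor
  · rintro ⟨X, hX⟩
    obtain ⟨x, hx, rfl⟩ := exists_arrayBlock_eq X
    rw [jordanBlock_mul_sub_mul_transpose_jordanBlock a b hx, arrayBlock_eq_iff] at hX
    exact ⟨x, hx, hX⟩
  · rintro ⟨x, hx, hxc⟩
    refine ⟨arrayBlock n m x, ?_⟩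
    rwa [jordanBlock_mul_sub_mul_transpose_jordanBlock a b hx, arrayBlock_eq_iff]

end JordanBlock

section General

lemma sum_filter_even_index_eq {M : Type*} [AddCommMonoid M] {g : ℕ → ℕ → M}
    (hg : ∀ i, g i 0 = 0) (j : ℕ) :
    ∑ ℓ ∈ Finset.range (j + 1) with 1 ≤ ℓ ∧ 2 * ℓ ≤ j, g (2 * ℓ) (j - 2 * ℓ + 1) =
      ∑ ℓ ∈ Finset.range (j + 1), g (2 * ℓ + 2) (j - 2 * ℓ - 1) := by
  have last_eq_zero : g (2 * j + 2) (j - 2 * j - 1) = 0 := by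
    rw [show j - 2 * j - 1 = 0 by lia, hg]
  rw [Finset.sum_filter, Finset.sum_range_succ', Finset.sum_range_succ _ j, last_eq_zero,
    if_neg (by lia)]
  refine congr_arg (· + 0) (Finset.sum_congr rfl fun ℓ _ => ?_)
  split_ifs with h
  · rw [show 2 * (ℓ + 1) = 2 * ℓ + 2 by ring, show j - (2 * ℓ + 2) + 1 = j - 2 * ℓ - 1 by lia]
  · rw [show j - 2 * ℓ - 1 = 0 by lia, hg]

variable {K R : Type*} [CommRing K] [Ring R] [Algebra K R]

lemma sylvesterArray_algebraMap_add (a : K) (u v : R) (x : ℕ → ℕ → R) :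
    sylvesterArray (algebraMap K R a + u) (algebraMap K R a + v) x = sylvesterArray u v x := by
  ext i j
  simp only [sylvesterArray, add_mul, mul_add, Algebra.commutes]
  abel

/-- Here `α = a + u`, `β = a + v` and `α' = a - u` replace the two quaternions, split into their
real and imaginary parts, and the conjugate of `α`. -/
theorem sylvester_jordan_singular_criterion_general {n m : ℕ} (hmn : m ≤ n) {a s : K}
    {α α' β u v : R} (hα : α = algebraMap K R a + u) (hα' : α' = algebraMap K R a - u)
    (hβ : β = algebraMap K R a + v) (hs : IsUnit (2 * s)) (hu : u * u = algebraMap K R s)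
    (hv : v * v = algebraMap K R s) {c d : ℕ → ℕ → R} (hc : VanishesOnAxes c)
    (hd : ∀ i j, d i j = c i j * β - α' * c i j + c (i - 1) j + c i (j - 1)) :
    (∃ X : Matrix (Fin n) (Fin m) R,
      jordanBlock n α * X - X * (jordanBlock m β)ᵀ = arrayBlock n m c) ↔
      ∀ j, 1 ≤ j → j ≤ m →
        (∑ ℓ ∈ Finset.range (j + 1), u * d (2 * ℓ + 1) (j - 2 * ℓ)) +
          (∑ ℓ ∈ (Finset.range (j + 1)).filter (fun ℓ => 1 ≤ ℓ ∧ 2 * ℓ ≤ j),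
            d (2 * ℓ) (j - 2 * ℓ + 1) * v) = 0 := by
  obtain rfl : d = cosylvesterArray u v c := by
    ext i j
    simp only [hd, hα', hβ, cosylvesterArray, mul_add, sub_mul, Algebra.commutes]
    abel
  have dv_col_zero (i : ℕ) : cosylvesterArray u v c i 0 * v = 0 := by
    rw [cosylvesterArray_col_zero hc.col_zero, zero_mul]
  simp only [exists_jordanBlock_sylvester_eq_iff, hα, hβ, sylvesterArray_algebraMap_add,
    exists_sylvesterArray_eq_iff hs hu hv hc hmn, sylvesterObstruction, Finset.sum_add_distrib,
    sum_filter_even_index_eq (g := fun i k => cosylvesterArray u v c i k * v) dv_col_zero]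

end General

section Quaternion

variable {α β h : ℍ[ℝ]}

lemma re_eq_of_eq_inv_mul_mul (h0 : h ≠ 0) (hαβ : α = h⁻¹ * β * h) : α.re = β.re := by
  have cyclic : (h⁻¹ * (β * h)).re = (β * h * h⁻¹).re := by
    simp only [Quaternion.re_mul]
    ring
  rwa [mul_inv_cancel_right₀ h0, ← mul_assoc, ← hαβ] at cyclic

lemma normSq_eq_of_eq_inv_mul_mul (h0 : h ≠ 0) (hαβ : α = h⁻¹ * β * h) : normSq α = normSq β := by
  have normSq_h_ne_zero : normSq h ≠ 0 := Quaternion.normSq_ne_zero.2 h0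
  rw [hαβ, map_mul, map_mul, Quaternion.normSq_inv]
  field_simp

lemma normSq_im_eq_normSq_sub_re_sq (q : ℍ[ℝ]) : normSq q.im = normSq q - q.re ^ 2 := by
  simp only [Quaternion.normSq_def', Quaternion.re_im, Quaternion.imI_im, Quaternion.imJ_im,
    Quaternion.imK_im]
  ring

lemma normSq_im_eq_of_eq_inv_mul_mul (h0 : h ≠ 0) (hαβ : α = h⁻¹ * β * h) :
    normSq α.im = normSq β.im := by
  rw [normSq_im_eq_normSq_sub_re_sq, normSq_im_eq_normSq_sub_re_sq,
    re_eq_of_eq_inv_mul_mul h0 hαβ, normSq_eq_of_eq_inv_mul_mul h0 hαβ]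

lemma im_mul_im_eq_algebraMap (q : ℍ[ℝ]) : q.im * q.im = algebraMap ℝ ℍ[ℝ] (-normSq q.im) := by
  rw [← sq, Quaternion.im_sq, Quaternion.algebraMap_def, Quaternion.coe_neg]

lemma star_eq_re_sub_im (q : ℍ[ℝ]) : star q = algebraMap ℝ ℍ[ℝ] q.re - q.im := by
  ext <;> simp

end Quaternion

/-- quaternion analog of Ma's conditions.  Let `α ∼ β` be conjugate
non-real quaternions, `n ≥ m ≥ 1`, `A = 𝒥_n(α)`, `B = 𝒥_m(β)ᵀ`, and `C = [c_{k,j}]` with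
`d_{k,j} = c_{k,j}β − ᾱc_{k,j} + c_{k−1,j} + c_{k,j−1}` (zero conventions for indices
outside the range).  Then `AX − XB = C` is solvable iff for every `j = 1,…,m`:
`Σ_{2ℓ≤j} Im(α)·d_{2ℓ+1,j−2ℓ} + Σ_{ℓ≥1, 2ℓ≤j} d_{2ℓ,j−2ℓ+1}·Im(β) = 0`.
(Indexing of `c, d` is 1-based with truncated subtraction; index `0` realizes the
"nonpositive index ↦ 0" convention.) -/
theorem sylvester_jordan_singular_criterion (n m : ℕ) (hm1 : 1 ≤ m) (hmn : m ≤ n)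
    (α β : ℍ[ℝ]) (hα : α.im ≠ 0) (hβ : β.im ≠ 0)
    (hconj : ∃ h : ℍ[ℝ], h ≠ 0 ∧ α = h⁻¹ * β * h)
    (c : ℕ → ℕ → ℍ[ℝ])
    (hc : ∀ i j, ¬(1 ≤ i ∧ i ≤ n ∧ 1 ≤ j ∧ j ≤ m) → c i j = 0)
    (d : ℕ → ℕ → ℍ[ℝ])
    (hd : ∀ i j, d i j = c i j * β - star α * c i j + c (i - 1) j + c i (j - 1))
    (A : Matrix (Fin n) (Fin n) ℍ[ℝ])
    (hA : A = Matrix.of fun (i j : Fin n) =>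
      if (i : ℕ) = (j : ℕ) then α else if (i : ℕ) = (j : ℕ) + 1 then 1 else 0)
    (B : Matrix (Fin m) (Fin m) ℍ[ℝ])
    (hB : B = Matrix.of fun (i j : Fin m) =>
      if (i : ℕ) = (j : ℕ) then β else if (j : ℕ) = (i : ℕ) + 1 then 1 else 0)
    (C : Matrix (Fin n) (Fin m) ℍ[ℝ])
    (hC : C = Matrix.of fun (i : Fin n) (j : Fin m) => c ((i : ℕ) + 1) ((j : ℕ) + 1)) :
    (∃ X : Matrix (Fin n) (Fin m) ℍ[ℝ], A * X - X * B = C) ↔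
      ∀ j, 1 ≤ j → j ≤ m →
        (∑ ℓ ∈ Finset.range (j + 1), α.im * d (2 * ℓ + 1) (j - 2 * ℓ)) +
          (∑ ℓ ∈ (Finset.range (j + 1)).filter (fun ℓ => 1 ≤ ℓ ∧ 2 * ℓ ≤ j),
            d (2 * ℓ) (j - 2 * ℓ + 1) * β.im) = 0 := by
  obtain ⟨h, h0, hαβ⟩ := hconj
  rw [hA, hB, hC, ← jordanBlock_eq_of, ← transpose_jordanBlock_eq_of]
  exact sylvester_jordan_singular_criterion_general hmn α.re_add_im.symm (star_eq_re_sub_im α)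
    (re_eq_of_eq_inv_mul_mul h0 hαβ ▸ β.re_add_im.symm) (by simpa using hα)
    (im_mul_im_eq_algebraMap α)
    (normSq_im_eq_of_eq_inv_mul_mul h0 hαβ ▸ im_mul_im_eq_algebraMap β)
    ⟨fun j => hc 0 j (by lia), fun i => hc i 0 (by lia)⟩ hd
end
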